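/- For every constant c > 0, the satisfiability probability of a random Horn formula satisfies e^{−c} − o(1) ≤ Pr_{Φ∈Ω(n,⌊c·2ⁿ⌋)}[Φ satisfiable] ≤ e^{−c/4}/(1 − e^{−c/4}) + o(1); that is, liminf_{n→∞} Pr[Φ satisfiable] ≥ e^{−c} and limsup_{n→∞} Pr[Φ satisfiable] ≤ e^{−c/4}/(1 − e^{−c/4}). -/

import Mathlib

open scoped BigOperators

/-- A (possibly empty) Horn clause over variables `x₁,…,xₙ`: an optional positive
literal together with a finset of negated variables. -/
abbrev HClause (n : ℕ) := Option (Fin n) × Finset (Fin n)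

/-- A Horn clause over `n` variables: a nonempty `HClause`. -/
abbrev HornClause (n : ℕ) := {C : HClause n // C ≠ ((none, ∅) : HClause n)}

/-- An assignment satisfies a clause iff its positive literal is true or some
negated variable is false. -/
def clauseSat {n : ℕ} (σ : Fin n → Bool) (C : HClause n) : Prop :=
  (∃ i, C.1 = some i ∧ σ i = true) ∨ (∃ j ∈ C.2, σ j = false)

/-- A formula (an `m`-tuple of Horn clauses) is satisfiable. -/
def formulaSat {n m : ℕ} (Φ : Fin m → HornClause n) : Prop :=
  ∃ σ : Fin n → Bool, ∀ j, clauseSat σ (Φ j).1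

/-- The probability that a random Horn formula with `n` variables and `m` clauses,
chosen independently and uniformly at random from all nonempty Horn clauses
(the model `Ω(n,m)`), is satisfiable. -/
noncomputable def hornSatProb (n m : ℕ) : ℝ :=
  (Nat.card {Φ : Fin m → HornClause n // formulaSat Φ} : ℝ) /
    (Fintype.card (HornClause n) : ℝ) ^ m

/-!
The all-false assignment falsifies only the `n` clauses consisting of a single positive literal, so
it survives all `m` clauses with probability about `(1 - n / (n 2ⁿ)) ^ m ≈ e^{-c}`.

Conversely, take a minimal model `T` of a satisfiable formula, with `k` true variables. Switching
off `v ∈ T` must falsify a clause, necessarily of the form `v ← B` with `B ⊆ T \ {v}`, and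
different `v` use different clauses. A union bound over `T` and over the positions of these `k`
clauses shows that such a `T` exists with probability at most about
`c ^ k 2 ^ (k (k - 1)) e ^ (-2 ^ k c)`: the remaining `m - k` clauses must avoid the roughly
`n 2 ^ k` clauses falsified by `T`. With `x = e ^ (-c / 4)` this is at most `x ^ (k + 1)` when
`x ≤ 1 / 2`, and for `x ≥ 1 / 2` the claimed bound is at least `1`. The loss from `e ^ (-2 ^ k c)`
to `x ^ (k + 1) ^ 2` absorbs every lower-order term once `n ≥ 9`, so that both bounds hold
without an error term.
-/

section

open Finset

variable {n m : ℕ}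

instance (σ : Fin n → Bool) (C : HClause n) : Decidable (clauseSat σ C) :=
  inferInstanceAs (Decidable (_ ∨ _))

/-- The assignment whose set of true variables is `T`. Every assignment has this form, so
models are handled below as finsets of variables. -/
def assignmentOfTrue (T : Finset (Fin n)) : Fin n → Bool := fun i => decide (i ∈ T)

lemma assignmentOfTrue_surjective :
    Function.Surjective (assignmentOfTrue : Finset (Fin n) → Fin n → Bool) :=
  fun σ => ⟨univ.filter (σ · = true), by ext; simp [assignmentOfTrue]⟩

lemma not_clauseSat_assignmentOfTrue {T : Finset (Fin n)} {C : HClause n} :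
    ¬ clauseSat (assignmentOfTrue T) C ↔ (∀ i ∈ T, C.1 ≠ some i) ∧ C.2 ⊆ T := by
  simp only [clauseSat, assignmentOfTrue, decide_eq_true_eq, decide_eq_false_iff_not, not_or,
    not_exists, not_and, not_not, subset_iff]
  exact and_congr_left' (forall_congr' fun _ => imp_not_comm)

/-- The Horn clauses satisfied by the assignment with true set `T`. -/
def satisfiedClauses (T : Finset (Fin n)) : Finset (HornClause n) :=
  {C | clauseSat (assignmentOfTrue T) C.1}

/-- The Horn clauses falsified by the assignment with true set `T`. -/
def falsifiedClauses (T : Finset (Fin n)) : Finset (HornClause n) :=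
  {C | ¬ clauseSat (assignmentOfTrue T) C.1}

/-- The clauses supporting `v` in `T`: those with head `v` and body contained in `T \ {v}`. They
are the clauses that force `v` to be true once the rest of `T` is. -/
def supportClauses (T : Finset (Fin n)) (v : Fin n) : Finset (HornClause n) :=
  {C | C.1.1 = some v ∧ C.1.2 ⊆ T.erase v}

lemma mem_satisfiedClauses {T : Finset (Fin n)} {C : HornClause n} :
    C ∈ satisfiedClauses T ↔ clauseSat (assignmentOfTrue T) C.1 := by
  simp [satisfiedClauses]

lemma mem_falsifiedClauses {T : Finset (Fin n)} {C : HornClause n} :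
    C ∈ falsifiedClauses T ↔ (∀ i ∈ T, C.1.1 ≠ some i) ∧ C.1.2 ⊆ T := by
  simp [falsifiedClauses, not_clauseSat_assignmentOfTrue]

lemma mem_supportClauses {T : Finset (Fin n)} {v : Fin n} {C : HornClause n} :
    C ∈ supportClauses T v ↔ C.1.1 = some v ∧ C.1.2 ⊆ T.erase v := by
  simp [supportClauses]

lemma notMem_satisfiedClauses {T : Finset (Fin n)} {C : HornClause n} :
    C ∉ satisfiedClauses T ↔ C ∈ falsifiedClauses T := by
  simp [satisfiedClauses, falsifiedClauses]

lemma formulaSat_iff_exists_satisfiedClauses {Φ : Fin m → HornClause n} :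
    formulaSat Φ ↔ ∃ T, ∀ j, Φ j ∈ satisfiedClauses T := by
  simp only [formulaSat, mem_satisfiedClauses, assignmentOfTrue_surjective.exists]

lemma mem_supportClauses_of_erase {T : Finset (Fin n)} {v : Fin n} {C : HornClause n}
    (hsat : C ∈ satisfiedClauses T) (herase : C ∉ satisfiedClauses (T.erase v)) :
    C ∈ supportClauses T v := by
  rw [notMem_satisfiedClauses, mem_falsifiedClauses] at herase
  obtain ⟨hhead, hbody⟩ := herase
  refine mem_supportClauses.2 ⟨?_, hbody⟩
  by_contra hv
  refine notMem_satisfiedClauses.2 (mem_falsifiedClauses.2 ⟨fun i hi => ?_, ?_⟩) hsat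
  · obtain rfl | hiv := eq_or_ne i v
    · exact hv
    · exact hhead i (mem_erase.2 ⟨hiv, hi⟩)
  · exact hbody.trans (erase_subset v T)

lemma exists_embedding_supportClauses {Φ : Fin m → HornClause n} {T : Finset (Fin n)}
    (hT : Minimal (fun T => ∀ j, Φ j ∈ satisfiedClauses T) T) :
    ∃ a : T ↪ Fin m, ∀ v : T, Φ (a v) ∈ supportClauses T v := by
  have hsupport (v : T) : ∃ j, Φ j ∈ supportClauses T v := by
    have hnot := hT.not_prop_of_lt (erase_ssubset v.2)
    push Not at hnot
    exact hnot.imp fun j hj => mem_supportClauses_of_erase (hT.prop j) hj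
  choose a ha using hsupport
  have ha_inj : Function.Injective a := fun v w hvw => by
    have hhead := (mem_supportClauses.1 (ha v)).1
    rw [hvw, (mem_supportClauses.1 (ha w)).1] at hhead
    exact (Subtype.ext (Option.some_injective _ hhead)).symm
  exact ⟨⟨a, ha_inj⟩, ha⟩

/-! ### Counting clauses -/

lemma card_hornClause_add_one (n : ℕ) : Fintype.card (HornClause n) + 1 = (n + 1) * 2 ^ n := by
  have hpos : 0 < (n + 1) * 2 ^ n := by positivity
  rw [Fintype.card_subtype_compl]
  simp only [Fintype.card_prod, Fintype.card_option, Fintype.card_fin, Fintype.card_finset,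
    Fintype.card_unique]
  omega

lemma card_hornClause_le (n : ℕ) : Fintype.card (HornClause n) ≤ (n + 1) * 2 ^ n :=
  (Nat.le_succ _).trans (card_hornClause_add_one n).le

lemma card_satisfiedClauses_add_card_falsifiedClauses (T : Finset (Fin n)) :
    #(satisfiedClauses T) + #(falsifiedClauses T) = Fintype.card (HornClause n) :=
  card_filter_add_card_filter_not _

lemma card_falsifiedClauses_add_one (T : Finset (Fin n)) :
    #(falsifiedClauses T) + 1 = (n + 1 - #T) * 2 ^ #T := by
  have hmap : (falsifiedClauses T).map (Function.Embedding.subtype _) =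
      ((T.map Function.Embedding.some)ᶜ ×ˢ T.powerset).erase (none, ∅) := by
    ext ⟨h, B⟩
    simp [mem_falsifiedClauses, eq_comm, and_comm, and_left_comm]
  have hmem : ((none, ∅) : HClause n) ∈ (T.map Function.Embedding.some)ᶜ ×ˢ T.powerset := by simp
  rw [← card_map, hmap, card_erase_add_one hmem, card_product, card_compl, card_map,
    card_powerset, Fintype.card_option, Fintype.card_fin]

lemma card_satisfiedClauses_empty_add (n : ℕ) :
    #(satisfiedClauses (∅ : Finset (Fin n))) + n = Fintype.card (HornClause n) := by
  have hfalsified : #(falsifiedClauses (∅ : Finset (Fin n))) = n := by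
    simpa using card_falsifiedClauses_add_one (∅ : Finset (Fin n))
  simpa only [hfalsified] using card_satisfiedClauses_add_card_falsifiedClauses (n := n) ∅

lemma mul_two_pow_le_card_satisfiedClauses_empty (n : ℕ) :
    n * 2 ^ n ≤ #(satisfiedClauses (∅ : Finset (Fin n))) := by
  have hcard := card_hornClause_add_one n
  have hempty := card_satisfiedClauses_empty_add n
  have hpow : n + 1 ≤ 2 ^ n := Nat.lt_two_pow_self
  linarith

lemma mul_two_pow_le_card_hornClause (n : ℕ) : n * 2 ^ n ≤ Fintype.card (HornClause n) :=
  (mul_two_pow_le_card_satisfiedClauses_empty n).trans (card_le_univ _)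

lemma card_supportClauses_le {T : Finset (Fin n)} {v : Fin n} (hv : v ∈ T) :
    #(supportClauses T v) ≤ 2 ^ (#T - 1) := by
  rw [← card_erase_of_mem hv, ← card_powerset]
  refine card_le_card_of_injOn (fun C => C.1.2) (fun C hC => ?_) (fun C hC D hD hbody => ?_)
  · exact mem_coe.2 (mem_powerset.2 (mem_supportClauses.1 hC).2)
  · have hhead := (mem_supportClauses.1 hC).1.trans (mem_supportClauses.1 hD).1.symm
    exact Subtype.ext (Prod.ext hhead hbody)

/-! ### Counting satisfiable formulas -/

lemma card_le_prod_card_mul_pow {ι κ α : Type*} [Fintype ι] [Fintype κ] (a : ι ↪ κ)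
    {S : ι → Finset α} {G : Finset α} {F : Finset (κ → α)} (hS : ∀ f ∈ F, ∀ i, f (a i) ∈ S i)
    (hG : ∀ f ∈ F, ∀ j, f j ∈ G) :
    #F ≤ (∏ i, #(S i)) * #G ^ (Fintype.card κ - Fintype.card ι) := by
  classical
  have hcard : Fintype.card ↥(Set.range a)ᶜ = Fintype.card κ - Fintype.card ι := by
    rw [Fintype.card_compl_set, Set.card_range_of_injective a.injective]
  calc #F ≤ #(Fintype.piFinset S ×ˢ Fintype.piFinset fun _ : ↥(Set.range a)ᶜ => G) := by
        refine card_le_card_of_injOn (fun f => (fun i => f (a i), fun j => f j)) ?_ ?_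
        · intro f hf
          exact mem_product.2 ⟨Fintype.mem_piFinset.2 (hS f hf),
            Fintype.mem_piFinset.2 fun j => hG f hf j⟩
        · intro f _ g _ hfg
          obtain ⟨hrange, hcompl⟩ := Prod.ext_iff.1 hfg
          funext j
          by_cases hj : j ∈ Set.range a
          · obtain ⟨i, rfl⟩ := hj
            exact congrFun hrange i
          · exact congrFun hcompl ⟨j, hj⟩
    _ = (∏ i, #(S i)) * #G ^ (Fintype.card κ - Fintype.card ι) := by
        simp [Fintype.card_piFinset, hcard]

lemma card_formulaSat_le_sum (n m : ℕ) :
    Nat.card {Φ : Fin m → HornClause n // formulaSat Φ} ≤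
      ∑ T : Finset (Fin n), m ^ #T * (2 ^ (#T * (#T - 1)) * #(satisfiedClauses T) ^ (m - #T)) := by
  classical
  let supported (T : Finset (Fin n)) (a : T ↪ Fin m) : Finset (Fin m → HornClause n) :=
    {Φ | (∀ v : T, Φ (a v) ∈ supportClauses T v) ∧ ∀ j, Φ j ∈ satisfiedClauses T}
  have hcover : ({Φ | formulaSat Φ} : Finset (Fin m → HornClause n)) ⊆
      univ.biUnion fun T => univ.biUnion fun a => supported T a := by
    intro Φ hΦ
    obtain ⟨T, hT⟩ := exists_minimal_of_wellFoundedLT (fun T => ∀ j, Φ j ∈ satisfiedClauses T)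
      (formulaSat_iff_exists_satisfiedClauses.1 (mem_filter.1 hΦ).2)
    obtain ⟨a, ha⟩ := exists_embedding_supportClauses hT
    simp only [mem_biUnion, mem_univ, true_and, supported, mem_filter]
    exact ⟨T, a, ha, hT.prop⟩
  have hsupported (T : Finset (Fin n)) (a : T ↪ Fin m) :
      #(supported T a) ≤ 2 ^ (#T * (#T - 1)) * #(satisfiedClauses T) ^ (m - #T) := by
    have hprod : ∏ v : T, #(supportClauses T v) ≤ 2 ^ (#T * (#T - 1)) := by
      rw [mul_comm, pow_mul]
      simpa using prod_le_pow_card univ _ _ fun v : T => fun _ => card_supportClauses_le v.2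
    have hcard := card_le_prod_card_mul_pow (F := supported T a) a
      (fun Φ hΦ => (mem_filter.1 hΦ).2.1) (fun Φ hΦ => (mem_filter.1 hΦ).2.2)
    rw [Fintype.card_fin, Fintype.card_coe] at hcard
    exact hcard.trans (Nat.mul_le_mul_right _ hprod)
  rw [Nat.subtype_card ({Φ | formulaSat Φ} : Finset _) (by simp)]
  refine (card_le_card hcover).trans (card_biUnion_le.trans (sum_le_sum fun T _ => ?_))
  refine (card_biUnion_le_card_mul _ _ _ fun a _ => hsupported T a).trans ?_
  rw [card_univ, Fintype.card_embedding_eq, Fintype.card_fin, Fintype.card_coe]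
  exact Nat.mul_le_mul_right _ (Nat.descFactorial_le_pow m #T)

lemma card_satisfiedClauses_pow_le (T : Finset (Fin n)) (m : ℕ) :
    #(satisfiedClauses T) ^ m ≤ Nat.card {Φ : Fin m → HornClause n // formulaSat Φ} := by
  classical
  calc #(satisfiedClauses T) ^ m = #(Fintype.piFinset fun _ : Fin m => satisfiedClauses T) := by
        simp [Fintype.card_piFinset]
    _ ≤ #{Φ : Fin m → HornClause n | formulaSat Φ} := card_le_card fun Φ hΦ =>
        mem_filter.2 ⟨mem_univ Φ,
          formulaSat_iff_exists_satisfiedClauses.2 ⟨T, Fintype.mem_piFinset.1 hΦ⟩⟩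
    _ = _ := (Nat.subtype_card _ (by simp)).symm

/-! ### The satisfiability probability -/

lemma hornSatProb_nonneg (n m : ℕ) : 0 ≤ hornSatProb n m := by
  unfold hornSatProb
  positivity

lemma hornSatProb_le_one (n m : ℕ) : hornSatProb n m ≤ 1 := by
  refine div_le_one_of_le₀ ?_ (by positivity)
  have hle := Finite.card_subtype_le (formulaSat : (Fin m → HornClause n) → Prop)
  rw [Nat.card_eq_fintype_card (α := Fin m → HornClause n), Fintype.card_fun,
    Fintype.card_fin] at hle
  exact_mod_cast hle

lemma natCast_mul_natCast_le {c s : ℝ} (hm : (m : ℝ) ≤ c * 2 ^ n) (hs : n * 2 ^ n ≤ s) :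
    (n : ℝ) * m ≤ c * s := by
  have hc : 0 ≤ c := nonneg_of_mul_nonneg_left (hm.trans' m.cast_nonneg) (by positivity)
  calc (n : ℝ) * m ≤ n * (c * 2 ^ n) := by gcongr
    _ = c * (n * 2 ^ n) := by ring
    _ ≤ c * s := by gcongr

lemma exp_neg_div_le_div_add {a b : ℝ} (ha : 0 < a) (hb : 0 ≤ b) :
    Real.exp (-(b / a)) ≤ a / (a + b) :=
  calc Real.exp (-(b / a)) = (Real.exp (b / a))⁻¹ := Real.exp_neg _
    _ ≤ (b / a + 1)⁻¹ := inv_anti₀ (by positivity) (Real.add_one_le_exp _)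
    _ = a / (a + b) := by field_simp; ring

lemma exp_neg_le_hornSatProb {c : ℝ} (hn : n ≠ 0) (hm : (m : ℝ) ≤ c * 2 ^ n) :
    Real.exp (-c) ≤ hornSatProb n m := by
  have hN : (Fintype.card (HornClause n) : ℝ) = #(satisfiedClauses (∅ : Finset (Fin n))) + n := by
    exact_mod_cast (card_satisfiedClauses_empty_add n).symm
  have hs : (n : ℝ) * 2 ^ n ≤ #(satisfiedClauses (∅ : Finset (Fin n))) := by
    exact_mod_cast mul_two_pow_le_card_satisfiedClauses_empty n
  have hcount : (#(satisfiedClauses (∅ : Finset (Fin n))) : ℝ) ^ m ≤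
      Nat.card {Φ : Fin m → HornClause n // formulaSat Φ} := by
    exact_mod_cast card_satisfiedClauses_pow_le ∅ m
  set s : ℝ := (#(satisfiedClauses (∅ : Finset (Fin n))) : ℝ)
  have hs_pos : 0 < s := hs.trans_lt' (by positivity)
  have hexponent : m * (n / s) ≤ c := by
    rw [← mul_div_assoc, div_le_iff₀ hs_pos, mul_comm]
    exact natCast_mul_natCast_le hm hs
  calc Real.exp (-c) ≤ Real.exp (-(n / s)) ^ m := by
        rw [← Real.exp_nat_mul, mul_neg]
        gcongr
    _ ≤ (s / (s + n)) ^ m := by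
        gcongr
        exact exp_neg_div_le_div_add hs_pos n.cast_nonneg
    _ ≤ hornSatProb n m := by
        rw [div_pow, hornSatProb, hN]
        gcongr

lemma card_satisfiedClauses_div_le_exp (T : Finset (Fin n)) :
    (#(satisfiedClauses T) / Fintype.card (HornClause n) : ℝ) ≤
      Real.exp (-(#(falsifiedClauses T) / Fintype.card (HornClause n))) := by
  have hsum : (#(satisfiedClauses T) : ℝ) =
      Fintype.card (HornClause n) - #(falsifiedClauses T) := by
    rw [eq_sub_iff_add_eq]
    exact_mod_cast card_satisfiedClauses_add_card_falsifiedClauses T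
  rw [hsum, sub_div]
  exact (sub_le_sub_right (div_self_le_one _) _).trans (Real.one_sub_le_exp_neg _)

lemma hornSatProb_le_sum_exp (hnm : n ≤ m) :
    hornSatProb n m ≤ ∑ T : Finset (Fin n),
      (m / Fintype.card (HornClause n) : ℝ) ^ #T * 2 ^ (#T * (#T - 1)) *
        Real.exp (-(#(falsifiedClauses T) / Fintype.card (HornClause n))) ^ (m - #T) := by
  set N : ℝ := (Fintype.card (HornClause n) : ℝ)
  have hcard : (Nat.card {Φ : Fin m → HornClause n // formulaSat Φ} : ℝ) ≤
      ∑ T : Finset (Fin n), (m : ℝ) ^ #T *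
        (2 ^ (#T * (#T - 1)) * (#(satisfiedClauses T) : ℝ) ^ (m - #T)) := by
    exact_mod_cast card_formulaSat_le_sum n m
  refine (div_le_div_of_nonneg_right hcard (by positivity)).trans ?_
  rw [sum_div]
  refine sum_le_sum fun T _ => ?_
  have hT : #T ≤ m := (card_finset_fin_le T).trans hnm
  calc _ = (m / N) ^ #T * 2 ^ (#T * (#T - 1)) * (#(satisfiedClauses T) / N) ^ (m - #T) := by
        rw [← pow_mul_pow_sub N hT, div_pow, div_pow]
        ring
    _ ≤ _ := by
        gcongr
        exact card_satisfiedClauses_div_le_exp T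

lemma succ_cube_add_three_le {k : ℕ} (hk : 9 ≤ k) : (k + 1) ^ 3 + 3 ≤ 3 * 2 ^ k := by
  induction k, hk using Nat.le_induction with
  | base => norm_num
  | succ k hk ih =>
    have hpoly : 9 ^ 2 * k ≤ k ^ 2 * k := by gcongr
    calc (k + 1 + 1) ^ 3 + 3 ≤ 2 * ((k + 1) ^ 3 + 3) := by linarith
      _ ≤ 2 * (3 * 2 ^ k) := by gcongr
      _ = 3 * 2 ^ (k + 1) := by ring

lemma succ_sq_mul_add_three_le {k : ℕ} (hn : 9 ≤ n) (hk : k ≤ n) :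
    (k + 1) ^ 2 * (n + 1) + 3 ≤ 3 * ((n + 1 - k) * 2 ^ k) := by
  -- The inequality fails for `n = 8`, `k = 3`.
  obtain ⟨d, rfl⟩ := Nat.exists_eq_add_of_le hk
  rw [show k + d + 1 - k = d + 1 by lia]
  obtain hlt | hge := lt_or_ge k 9
  · interval_cases k <;> lia
  · calc (k + 1) ^ 2 * (k + d + 1) + 3 ≤ (d + 1) * ((k + 1) ^ 3 + 3) := by
          linarith [Nat.zero_le (d * (k + 1) ^ 2 * k)]
      _ ≤ (d + 1) * (3 * 2 ^ k) := by gcongr; exact succ_cube_add_three_le hge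
      _ = 3 * ((d + 1) * 2 ^ k) := by ring

lemma succ_sq_div_le_card_falsifiedClauses_div (hn : 9 ≤ n) (T : Finset (Fin n)) :
    ((#T : ℝ) + 1) ^ 2 / (3 * 2 ^ n) ≤
      #(falsifiedClauses T) / Fintype.card (HornClause n) := by
  have hN : 0 < Fintype.card (HornClause n) :=
    (mul_two_pow_le_card_hornClause n).trans_lt' (by positivity)
  have hfalsified : (#T + 1) ^ 2 * (n + 1) ≤ 3 * #(falsifiedClauses T) := by
    have hcard := card_falsifiedClauses_add_one T
    have harith := succ_sq_mul_add_three_le hn (card_finset_fin_le T)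
    lia
  rw [div_le_div_iff₀ (by positivity) (by exact_mod_cast hN)]
  norm_cast
  calc (#T + 1) ^ 2 * Fintype.card (HornClause n) ≤ (#T + 1) ^ 2 * ((n + 1) * 2 ^ n) := by
        gcongr
        exact card_hornClause_le n
    _ = (#T + 1) ^ 2 * (n + 1) * 2 ^ n := by ring
    _ ≤ 3 * #(falsifiedClauses T) * 2 ^ n := by gcongr
    _ = #(falsifiedClauses T) * (3 * 2 ^ n) := by ring

lemma sum_div_card_hornClause_pow_mul_le {c : ℝ} {w : ℕ → ℝ} (hw : ∀ k, 0 ≤ w k)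
    (hn : n ≠ 0) (hm : (m : ℝ) ≤ c * 2 ^ n) :
    ∑ T : Finset (Fin n), (m / Fintype.card (HornClause n) : ℝ) ^ #T * w #T ≤
      ∑ k ∈ range (n + 1), c ^ k * w k := by
  have hN : (n : ℝ) * 2 ^ n ≤ Fintype.card (HornClause n) := by
    exact_mod_cast mul_two_pow_le_card_hornClause n
  have hmean : (n : ℝ) * (m / Fintype.card (HornClause n)) ≤ c := by
    rw [← mul_div_assoc, div_le_iff₀ (hN.trans_lt' (by positivity))]
    exact natCast_mul_natCast_le hm hN
  rw [← powerset_univ,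
    sum_powerset_apply_card fun k => (m / Fintype.card (HornClause n) : ℝ) ^ k * w k,
    card_univ, Fintype.card_fin]
  refine sum_le_sum fun k _ => ?_
  have hchoose : (n.choose k : ℝ) ≤ (n : ℝ) ^ k := by exact_mod_cast Nat.choose_le_pow n k
  calc _ ≤ (n : ℝ) ^ k * ((m / Fintype.card (HornClause n) : ℝ) ^ k * w k) := by
        rw [nsmul_eq_mul]
        have := hw k
        gcongr
    _ = (n * (m / Fintype.card (HornClause n)) : ℝ) ^ k * w k := by rw [mul_pow, mul_assoc]
    _ ≤ c ^ k * w k := by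
        have := hw k
        gcongr

lemma hornSatProb_le_sum_range {c : ℝ} (hn : 9 ≤ n) (hm : (m : ℝ) ≤ c * 2 ^ n)
    (hm' : 3 / 4 * (c * 2 ^ n) + n ≤ m) :
    hornSatProb n m ≤
      ∑ k ∈ range (n + 1), c ^ k * (2 ^ (k * (k - 1)) * Real.exp (-c / 4) ^ (k + 1) ^ 2) := by
  have hnm : n ≤ m := by
    have hnonneg : 0 ≤ c * 2 ^ n := hm.trans' m.cast_nonneg
    exact_mod_cast (by linarith only [hnonneg, hm'] : (n : ℝ) ≤ m)
  refine (hornSatProb_le_sum_exp hnm).trans ((sum_le_sum fun T _ => ?_).trans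
    (sum_div_card_hornClause_pow_mul_le (fun k => by positivity) (by lia) hm))
  rw [mul_assoc]
  gcongr _ * (_ * ?_)
  rw [← Real.exp_nat_mul, ← Real.exp_nat_mul, Real.exp_le_exp]
  have hT : #T ≤ n := card_finset_fin_le T
  have hclauses : 3 / 4 * (c * 2 ^ n) ≤ (m - #T : ℕ) := by
    have : (#T : ℝ) ≤ n := by exact_mod_cast hT
    rw [Nat.cast_sub (hT.trans hnm)]
    linarith
  -- The `1 / 3` lost on the falsified clauses and the `3 / 4` lost on the clauses outside the
  -- support of `T` multiply to the `1 / 4` in `e ^ (-c / 4)`.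
  have hexponent : (#T + 1 : ℝ) ^ 2 * (c / 4) ≤
      (m - #T : ℕ) * (#(falsifiedClauses T) / Fintype.card (HornClause n)) :=
    calc (#T + 1 : ℝ) ^ 2 * (c / 4)
        = 3 / 4 * (c * 2 ^ n) * ((#T + 1) ^ 2 / (3 * 2 ^ n)) := by field_simp
      _ ≤ _ := mul_le_mul hclauses (succ_sq_div_le_card_falsifiedClauses_div hn T)
        (by positivity) (by positivity)
  push_cast
  linarith

lemma pow_mul_two_pow_mul_pow_le {c x : ℝ} (hc : 0 ≤ c) (hx₀ : 0 ≤ x) (hx : x ≤ 1 / 2)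
    (hcx : c * x ≤ 2) (k : ℕ) :
    c ^ k * (2 ^ (k * (k - 1)) * x ^ (k + 1) ^ 2) ≤ x ^ (k + 1) := by
  have hsq : k + k * (k - 1) = k * k := by
    rw [Nat.mul_sub_one, Nat.add_sub_cancel' (Nat.le_mul_self k)]
  calc c ^ k * (2 ^ (k * (k - 1)) * x ^ (k + 1) ^ 2)
      = x ^ (k + 1) * ((c * x) ^ k * 2 ^ (k * (k - 1)) * x ^ (k * k)) := by ring
    _ ≤ x ^ (k + 1) * (2 ^ k * 2 ^ (k * (k - 1)) * (1 / 2) ^ (k * k)) := by gcongr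
    _ = x ^ (k + 1) := by
        rw [← pow_add, hsq, ← mul_pow]
        norm_num

lemma hornSatProb_floor_le {c : ℝ} (hc : 0 < c) (hn : 9 ≤ n) :
    hornSatProb n ⌊c * 2 ^ n⌋₊ ≤ Real.exp (-c / 4) / (1 - Real.exp (-c / 4)) := by
  have hlin : 1 - c / 4 ≤ Real.exp (-c / 4) := by
    simpa only [neg_div] using Real.one_sub_le_exp_neg (c / 4)
  set x := Real.exp (-c / 4) with hx_def
  have hx₀ : 0 < x := Real.exp_pos _
  have hx₁ : x < 1 := Real.exp_lt_one_iff.2 (by linarith)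
  obtain hx | hx := le_total (1 / 2) x
  · refine (hornSatProb_le_one n _).trans ?_
    rw [one_le_div (by linarith)]
    linarith
  have hcx : c * x ≤ 2 := by
    rw [hx_def, neg_div, Real.exp_neg, ← div_eq_mul_inv, div_le_iff₀ (Real.exp_pos _)]
    linarith [Real.two_mul_le_exp (x := c / 4)]
  have hfloor : 3 / 4 * (c * 2 ^ n) + n ≤ ⌊c * 2 ^ n⌋₊ := by
    have hpow : 2 * ((n : ℝ) + 1) ≤ 2 ^ n := by
      have hcube := succ_cube_add_three_le hn
      have hsq : 10 ^ 2 * (n + 1) ≤ (n + 1) ^ 2 * (n + 1) := by gcongr; lia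
      exact_mod_cast (by linarith : 2 * (n + 1) ≤ 2 ^ n)
    have hc₂ : 2 * 2 ^ n ≤ c * 2 ^ n := by gcongr; linarith
    linarith [Nat.lt_floor_add_one (c * 2 ^ n)]
  calc hornSatProb n ⌊c * 2 ^ n⌋₊
      ≤ ∑ k ∈ range (n + 1), c ^ k * (2 ^ (k * (k - 1)) * x ^ (k + 1) ^ 2) :=
        hornSatProb_le_sum_range hn (Nat.floor_le (by positivity)) hfloor
    _ ≤ ∑ k ∈ range (n + 1), x ^ (k + 1) :=
        sum_le_sum fun k _ => pow_mul_two_pow_mul_pow_le hc.le hx₀.le hx hcx k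
    _ ≤ x / (1 - x) := by
        simpa [sum_Ico_eq_sum_range, add_comm] using
          geom_sum_Ico_le_of_lt_one (m := 1) (n := n + 2) hx₀.le hx₁

theorem horn_sat_prob_bounds_general {c : ℝ} (hc : 0 < c) (hn : 9 ≤ n) :
    Real.exp (-c) ≤ hornSatProb n ⌊c * 2 ^ n⌋₊ ∧
      hornSatProb n ⌊c * 2 ^ n⌋₊ ≤ Real.exp (-c / 4) / (1 - Real.exp (-c / 4)) :=
  ⟨exp_neg_le_hornSatProb (by lia) (Nat.floor_le (by positivity)), hornSatProb_floor_le hc hn⟩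

end

/-- For every constant `c > 0`,
`e^{-c} - o(1) ≤ Pr[Φ satisfiable] ≤ e^{-c/4}/(1 - e^{-c/4}) + o(1)` for
`Φ ∈ Ω(n, ⌊c·2ⁿ⌋)`; i.e. the liminf of the satisfiability probability is at
least `e^{-c}` and its limsup is at most `e^{-c/4}/(1 - e^{-c/4})`. -/
theorem horn_sat_prob_bounds (c : ℝ) (hc : 0 < c) :
    Real.exp (-c) ≤
        Filter.liminf (fun n : ℕ => hornSatProb n ⌊c * 2 ^ n⌋₊) Filter.atTop ∧
      Filter.limsup (fun n : ℕ => hornSatProb n ⌊c * 2 ^ n⌋₊) Filter.atTop ≤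
        Real.exp (-c / 4) / (1 - Real.exp (-c / 4)) := by
  have hbounds := (Filter.eventually_ge_atTop 9).mono fun n =>
    horn_sat_prob_bounds_general (n := n) hc
  have hle : Filter.IsBoundedUnder (· ≤ ·) Filter.atTop fun n : ℕ => hornSatProb n ⌊c * 2 ^ n⌋₊ :=
    Filter.isBoundedUnder_of ⟨1, fun n => hornSatProb_le_one n _⟩
  have hge : Filter.IsBoundedUnder (· ≥ ·) Filter.atTop fun n : ℕ => hornSatProb n ⌊c * 2 ^ n⌋₊ :=
    Filter.isBoundedUnder_of ⟨0, fun n => hornSatProb_nonneg n _⟩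
  exact ⟨Filter.le_liminf_of_le hle.isCoboundedUnder_ge (hbounds.mono fun _ h => h.1),
    Filter.limsup_le_of_le hge.isCoboundedUnder_le (hbounds.mono fun _ h => h.2)⟩
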